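/- Let γ ∈ ℝ, let q ≥ 3 be fixed, and let K be a location-scale invariant kernel, not everywhere constant, such that ||K||_a := (E[|K((Z_{q−j:q−1})_{j=1}^{q})|^a])^{1/a} < ∞ for all a > 0 (Z's iid standard GP(γ), Z_{0:q−1} := 0). For index sets S, S' with |S| = |S'| = m and |S ∩ S'| = 1, put ζ_{m,1} = cov(K_m(Z_S), K_m(Z_{S'})) with the Z's iid standard GP(γ). Then for every integer m ≥ q and every a > 2, ζ_{m,1} ≤ (2q)^{1−2/a} ||K||_a² m^{2/a−1}. -/

import Mathlib

open MeasureTheory ProbabilityTheory Filter Real Set Topology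
open scoped ENNReal NNReal Classical

noncomputable section

/-- The `j`-th largest entry of the tuple `x` (`j = 0` gives the maximum, `j = 1` the
second largest, ...); `0` when `j` is out of range. -/
def descStat {m : ℕ} (x : Fin m → ℝ) (j : ℕ) : ℝ :=
  if h : j < m then (x ∘ Tuple.sort x) ⟨m - 1 - j, by omega⟩ else 0

/-- The kernel of degree `m` obtained from `K` by applying it to the top-`q`
(descending) order statistics: `K_m(x_1,…,x_m) = K(x_{m:m},…,x_{m−q+1:m})`. -/
def Km {q : ℕ} (K : (Fin q → ℝ) → ℝ) (m : ℕ) (x : Fin m → ℝ) : ℝ :=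
  K fun j => descStat x (j : ℕ)

/-- `K(a x_1 + b, …, a x_q + b) = K(x_1, …, x_q)` for all `a > 0`, `b ∈ ℝ`. -/
def LocScaleInvariant {q : ℕ} (K : (Fin q → ℝ) → ℝ) : Prop :=
  ∀ a b : ℝ, 0 < a → ∀ x : Fin q → ℝ, K (fun j => a * x j + b) = K x

/-- `h_γ(y) = (y^γ - 1)/γ`, interpreted as `log y` when `γ = 0`. -/
def hGamma (γ : ℝ) (y : ℝ) : ℝ := if γ = 0 then Real.log y else (y ^ γ - 1) / γ

lemma measurable_hGamma (γ : ℝ) : Measurable (hGamma γ) := by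
  unfold hGamma
  split_ifs
  · exact Real.measurable_log
  · fun_prop

/-- The uniform distribution on `(0,1)`. -/
def unif01 : Measure ℝ := volume.restrict (Set.Ioo (0:ℝ) 1)

instance : IsProbabilityMeasure unif01 := ⟨by simp [unif01]⟩

/-- The standard Pareto(1) distribution, with cdf `1 - 1/y` for `y ≥ 1`. -/
def pareto1 : Measure ℝ := ProbabilityTheory.paretoMeasure 1 1

instance : IsProbabilityMeasure pareto1 :=
  ProbabilityTheory.isProbabilityMeasure_paretoMeasure one_pos one_pos

/-- The standard generalized Pareto distribution `GP(γ)`: the law of `h_γ(Y)` for `Y`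
standard Pareto(1). -/
def gpMeasure (γ : ℝ) : Measure ℝ := pareto1.map (hGamma γ)

instance (γ : ℝ) : IsProbabilityMeasure (gpMeasure γ) :=
  Measure.isProbabilityMeasure_map (measurable_hGamma γ).aemeasurable

/-- The unit exponential distribution: the law of `-log U` for `U` uniform on `(0,1)`. -/
def expMeasure1 : Measure ℝ := unif01.map fun u => -Real.log u

instance : IsProbabilityMeasure expMeasure1 :=
  Measure.isProbabilityMeasure_map Real.measurable_log.neg.aemeasurable

/-- The Erlang(q) distribution: the law of the sum of `q` independent unit exponentials. -/
def erlangMeasure (q : ℕ) : Measure ℝ :=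
  (Measure.pi fun _ : Fin q => expMeasure1).map fun e => ∑ i, e i

instance (q : ℕ) : IsProbabilityMeasure (erlangMeasure q) :=
  Measure.isProbabilityMeasure_map
    (Finset.measurable_sum _ fun i _ => measurable_pi_apply i).aemeasurable

/-- The joint law of `r` iid `GP(γ)` random variables. -/
def gpPi (γ : ℝ) (r : ℕ) : Measure (Fin r → ℝ) := Measure.pi fun _ => gpMeasure γ

instance (γ : ℝ) (r : ℕ) : IsProbabilityMeasure (gpPi γ r) := by
  unfold gpPi; infer_instance

/-- The vector `(Z_{q-j:q-1})_{j=1}^{q}`: the descending order statistics of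
`z_1,…,z_{q-1}` with an extra last entry `Z_{0:q-1} := 0`. -/
def refVec {q : ℕ} (z : Fin (q-1) → ℝ) : Fin q → ℝ := fun j => descStat z (j : ℕ)

/-- `θ = E[K((Z_{q-j:q-1})_{j=1}^{q})]` for iid `GP(γ)` variables `Z_1,…,Z_{q-1}`. -/
def thetaK (γ : ℝ) {q : ℕ} (K : (Fin q → ℝ) → ℝ) : ℝ :=
  ∫ z, K (refVec z) ∂(gpPi γ (q-1))

/-- all moments of `K((Z_{q-j:q-1})_{j=1}^{q})` are finite. -/
def MomentCond (γ : ℝ) {q : ℕ} (K : (Fin q → ℝ) → ℝ) : Prop :=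
  ∀ p : ℝ, 0 < p →
    ∫⁻ z, ENNReal.ofReal (|K (refVec z)| ^ p) ∂(gpPi γ (q-1)) < ⊤

/-- The asymptotic variance
`σ²_K(γ) = ∫_0^∞ (E[K̄_{q+1}((Z_{q-j:q-1})_{j=1}^q, h_γ(S_q/x))])² dx`. -/
def sigmaSqK (γ : ℝ) {q : ℕ} (K : (Fin q → ℝ) → ℝ) : ℝ :=
  ∫ x in Set.Ioi (0:ℝ),
    (∫ zs : (Fin (q-1) → ℝ) × ℝ,
        (Km K (q+1) (Fin.snoc (refVec zs.1) (hGamma γ (zs.2 / x))) - thetaK γ K)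
      ∂((gpPi γ (q-1)).prod (erlangMeasure q))) ^ 2

/-- The U-statistic with kernel `K_m` evaluated on the sample `z`. -/
def UStat {q : ℕ} (K : (Fin q → ℝ) → ℝ) (m n : ℕ) (z : Fin n → ℝ) : ℝ :=
  ((n.choose m : ℝ))⁻¹ *
    ∑ I ∈ Finset.powersetCard m (Finset.univ : Finset (Fin n)),
      Km K I.card fun j => z (I.orderIsoOfFin rfl j).1

/-- Condition on the degree sequence: `m = o(n^{1-ε})` and `log n = o(m^{1-δ})`. -/
def DegreeCond (m : ℕ → ℕ) : Prop :=
  ∃ ε > (0:ℝ), ∃ δ > (0:ℝ),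
    Tendsto (fun n => (m n : ℝ) / (n : ℝ) ^ (1 - ε)) atTop (𝓝 0) ∧
    Tendsto (fun n : ℕ => Real.log n / (m n : ℝ) ^ (1 - δ)) atTop (𝓝 0)

/-- `ζ_{m,ℓ} = cov(K_m(Z_S), K_m(Z_{S'}))` for the blocks `S = [1:m]`,
`S' = [(m-ℓ+1):(2m-ℓ)]` (zero-indexed here), which overlap in `ℓ` indices. -/
def zetaCov {Ω : Type*} [MeasurableSpace Ω] (P : Measure Ω) {q : ℕ}
    (K : (Fin q → ℝ) → ℝ) (Z : ℕ → Ω → ℝ) (m ℓ : ℕ) : ℝ :=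
  (∫ ω, Km K m (fun i : Fin m => Z i ω) * Km K m (fun i : Fin m => Z (m - ℓ + i) ω) ∂P)
    - (∫ ω, Km K m (fun i : Fin m => Z i ω) ∂P)
      * (∫ ω, Km K m (fun i : Fin m => Z (m - ℓ + i) ω) ∂P)

/-- Convergence in distribution to a Gaussian, expressed via pointwise convergence of
the cumulative distribution functions (the Gaussian cdf being continuous). -/
def TendstoGaussian {Ω : Type*} [MeasurableSpace Ω] (P : Measure Ω)
    (T : ℕ → Ω → ℝ) (μ : ℝ) (v : ℝ≥0) : Prop :=
  ∀ x : ℝ, Tendsto (fun n => (P {ω | T n ω ≤ x}).toReal) atTop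
    (𝓝 ((gaussianReal μ v (Set.Iic x)).toReal))

/-- Convergence in probability to the constant `c`. -/
def TendstoInProb {Ω : Type*} [MeasurableSpace Ω] (P : Measure Ω)
    (T : ℕ → Ω → ℝ) (c : ℝ) : Prop :=
  ∀ ε : ℝ, 0 < ε → Tendsto (fun n => (P {ω | ε ≤ |T n ω - c|}).toReal) atTop (𝓝 0)


/-- `‖K‖_a = (E[|K((Z_{q-j:q-1})_{j=1}^q)|^a])^{1/a}`. -/
def normKa (γ : ℝ) {q : ℕ} (K : (Fin q → ℝ) → ℝ) (a : ℝ) : ℝ :=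
  (∫ z, |K (refVec z)| ^ a ∂(gpPi γ (q-1))) ^ (1/a)

/-- Number of entries strictly above `c`. -/
def cntGt {m : ℕ} (x : Fin m → ℝ) (c : ℝ) : ℕ := ∑ i, if c < x i then 1 else 0

lemma cntGt_perm {m : ℕ} (x : Fin m → ℝ) (σ : Equiv.Perm (Fin m)) (c : ℝ) :
    cntGt (x ∘ σ) c = cntGt x c := by
  unfold cntGt
  exact Equiv.sum_comp σ (fun i => if c < x i then 1 else 0)

lemma lt_cntGt_iff {m : ℕ} (y : Fin m → ℝ) (hy : Antitone y) (j : ℕ) (hj : j < m) (c : ℝ) :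
    j < cntGt y c ↔ c < y ⟨j, hj⟩ := by
  unfold cntGt
  have := Tuple.lt_card_gt_iff_apply_gt_of_antitone (f := y) (a := c) (j := ⟨j, hj⟩) hy
  rw [← this, Finset.card_filter]

lemma lt_descStat_iff {m : ℕ} (x : Fin m → ℝ) (j : ℕ) (hj : j < m) (c : ℝ) :
    c < descStat x j ↔ j < cntGt x c := by
  have h : Antitone ((x ∘ Tuple.sort x) ∘ Fin.rev) :=
    (Tuple.monotone_sort x).comp_antitone Fin.rev_anti
  have h2 := lt_cntGt_iff _ h j hj c
  have h3 : cntGt ((x ∘ Tuple.sort x) ∘ Fin.rev) c = cntGt x c := by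
    have := cntGt_perm (x ∘ Tuple.sort x) Fin.revPerm c
    exact this.trans (cntGt_perm x _ c)
  rw [h3] at h2
  rw [h2, descStat, dif_pos hj]
  have : (⟨m - 1 - j, by omega⟩ : Fin m) = Fin.rev ⟨j, hj⟩ := by
    ext; simp [Fin.rev]; omega
  rw [this]; rfl

lemma descStat_perm {m : ℕ} (x : Fin m → ℝ) (σ : Equiv.Perm (Fin m)) (j : ℕ) :
    descStat (x ∘ σ) j = descStat x j := by
  by_cases hj : j < m
  · refine eq_of_forall_lt_iff fun c => ?_
    rw [lt_descStat_iff _ _ hj, lt_descStat_iff _ _ hj, cntGt_perm]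
  · simp [descStat, hj]

lemma descStat_antitone {m : ℕ} (y : Fin m → ℝ) (hy : Antitone y) (j : ℕ) (hj : j < m) :
    descStat y j = y ⟨j, hj⟩ := by
  refine eq_of_forall_lt_iff fun c => ?_
  rw [lt_descStat_iff _ _ hj, lt_cntGt_iff y hy j hj]

lemma cntGt_le {m : ℕ} (x : Fin m → ℝ) (c : ℝ) : cntGt x c ≤ m := by
  unfold cntGt
  rw [← Finset.card_filter]
  simpa using Finset.card_filter_le (Finset.univ : Finset (Fin m)) (fun i => c < x i)

lemma cntGt_anti {m : ℕ} (x : Fin m → ℝ) {c d : ℝ} (h : c ≤ d) : cntGt x d ≤ cntGt x c := by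
  unfold cntGt
  refine Finset.sum_le_sum fun i _ => ?_
  split_ifs with h1 h2 <;> first | omega | (exfalso; linarith)

lemma cntGt_snoc {n : ℕ} (x : Fin n → ℝ) (z c : ℝ) :
    cntGt (Fin.snoc x z : Fin (n+1) → ℝ) c = cntGt x c + if c < z then 1 else 0 := by
  unfold cntGt
  rw [Fin.sum_univ_castSucc]
  simp only [Fin.snoc_castSucc, Fin.snoc_last]

lemma cntGt_cons {n : ℕ} (x : Fin n → ℝ) (z c : ℝ) :
    cntGt (Fin.cons z x : Fin (n+1) → ℝ) c = cntGt x c + if c < z then 1 else 0 := by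
  unfold cntGt
  rw [Fin.sum_univ_succ, add_comm]
  simp only [Fin.cons_succ, Fin.cons_zero]

lemma descStat_cons {n : ℕ} (x : Fin n → ℝ) (z : ℝ) (j : ℕ) :
    descStat (Fin.cons z x : Fin (n+1) → ℝ) j = descStat (Fin.snoc x z : Fin (n+1) → ℝ) j := by
  by_cases hj : j < n + 1
  · refine eq_of_forall_lt_iff fun c => ?_
    rw [lt_descStat_iff _ _ hj, lt_descStat_iff _ _ hj, cntGt_cons, cntGt_snoc]
  · simp [descStat, hj]

lemma descStat_snoc {n q : ℕ} (x : Fin n → ℝ) (z : ℝ) (h : q ≤ cntGt x z) (j : ℕ) (hj : j < q) :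
    descStat (Fin.snoc x z : Fin (n+1) → ℝ) j = descStat x j := by
  have hn := cntGt_le x z
  refine eq_of_forall_lt_iff fun c => ?_
  rw [lt_descStat_iff _ _ (by omega), lt_descStat_iff _ _ (by omega), cntGt_snoc]
  split_ifs with hc
  · have := cntGt_anti x hc.le
    constructor <;> intro <;> omega
  · simp

lemma measurable_cntGt {m : ℕ} (c : ℝ) : Measurable (fun x : Fin m → ℝ => cntGt x c) := by
  unfold cntGt
  refine Finset.measurable_sum _ fun i _ => Measurable.ite ?_ measurable_const measurable_const
  exact measurableSet_lt measurable_const (measurable_pi_apply i)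

lemma measurable_cntGt2 {m : ℕ} : Measurable (fun p : (Fin m → ℝ) × ℝ => cntGt p.1 p.2) := by
  unfold cntGt
  refine Finset.measurable_sum _ fun i _ => Measurable.ite ?_ measurable_const measurable_const
  exact measurableSet_lt measurable_snd (by fun_prop)

lemma measurable_descStat {m : ℕ} (j : ℕ) : Measurable (fun x : Fin m → ℝ => descStat x j) := by
  by_cases hj : j < m
  · refine measurable_of_Ioi fun c => ?_
    have : (fun x : Fin m → ℝ => descStat x j) ⁻¹' Ioi c
        = (fun x : Fin m → ℝ => cntGt x c) ⁻¹' (Ioi j) := by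
      ext x; simp [lt_descStat_iff _ _ hj]
    rw [this]
    exact measurable_cntGt c (measurableSet_Ioi)
  · simp only [descStat, hj, dite_false]; exact measurable_const

lemma measurable_Km {q : ℕ} {K : (Fin q → ℝ) → ℝ} (hK : Measurable K) (m : ℕ) :
    Measurable (Km K m) :=
  hK.comp (measurable_pi_lambda _ fun _ => measurable_descStat _)

lemma measurable_refVec {q : ℕ} : Measurable (refVec (q := q)) :=
  measurable_pi_lambda _ fun _ => measurable_descStat _

lemma Km_perm {q : ℕ} (K : (Fin q → ℝ) → ℝ) (m : ℕ) (x : Fin m → ℝ) (σ : Equiv.Perm (Fin m)) :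
    Km K m (x ∘ σ) = Km K m x := by
  simp [Km, descStat_perm]

lemma hGamma_one (γ : ℝ) : hGamma γ 1 = 0 := by simp [hGamma]

lemma hGamma_mul (γ s y : ℝ) (hs : 0 < s) (hy : 0 < y) :
    hGamma γ (s * y) = s ^ γ * hGamma γ y + hGamma γ s := by
  unfold hGamma
  split_ifs with h
  · simp [h, Real.log_mul hs.ne' hy.ne', add_comm]
  · rw [Real.mul_rpow hs.le hy.le]; field_simp; ring

lemma hGamma_strictMono (γ s t : ℝ) (hs : 0 < s) (h : s < t) : hGamma γ s < hGamma γ t := by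
  unfold hGamma
  split_ifs with h0
  · exact Real.log_lt_log hs h
  · rcases lt_or_gt_of_ne h0 with h1 | h1
    · rw [div_lt_div_right_of_neg h1]
      have := Real.rpow_lt_rpow_of_neg hs h h1
      linarith
    · have := Real.rpow_lt_rpow hs.le h h1
      gcongr

instance : NullSingletonClass pareto1 := by unfold pareto1 paretoMeasure; infer_instance

lemma pareto1_Iio : pareto1 (Iio 1) = 0 := by
  rw [pareto1, paretoMeasure, withDensity_apply _ measurableSet_Iio]
  exact lintegral_paretoPDF_of_le le_rfl

lemma pareto1_ae : ∀ᵐ y ∂pareto1, 1 < y := by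
  have h : pareto1 (Iic 1) = 0 := by
    rw [← Iio_union_right]
    exact measure_union_null pareto1_Iio (measure_singleton _)
  rw [ae_iff]
  convert h using 2
  ext; simp

lemma pareto1_Ici (t : ℝ) (ht : 1 ≤ t) : pareto1 (Ici t) = ENNReal.ofReal t⁻¹ := by
  have ht0 : 0 < t := by linarith
  rw [pareto1, paretoMeasure, withDensity_apply _ measurableSet_Ici]
  rw [setLIntegral_congr_fun (g := fun x => ENNReal.ofReal (x ^ (-2:ℝ))) measurableSet_Ici]
  · rw [← ofReal_integral_eq_lintegral_ofReal]
    · rw [integral_Ici_eq_integral_Ioi, integral_Ioi_rpow_of_lt (by norm_num) ht0]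
      congr 1
      norm_num
      rw [Real.rpow_neg_one]
    · rw [← IntegrableOn, integrableOn_Ici_iff_integrableOn_Ioi]
      exact integrableOn_Ioi_rpow_of_lt (by norm_num) ht0
    · rw [EventuallyLE, ae_restrict_iff' measurableSet_Ici]
      filter_upwards with x hx
      have : 0 < x := lt_of_lt_of_le ht0 hx
      simp; positivity
  · intro x hx
    have : 1 ≤ x := le_trans ht hx
    simp only [paretoPDF_of_le this]
    norm_num

lemma pareto1_Ici_le (t : ℝ) (ht : t ≤ 1) : pareto1 (Ici t) = 1 := by
  rw [← prob_compl_eq_zero_iff measurableSet_Ici]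
  exact measure_mono_null (fun x hx => by simp at hx ⊢; linarith) pareto1_Iio

lemma pareto1_scale (s : ℝ) (hs : 1 ≤ s) :
    pareto1.restrict (Ioi s) = ENNReal.ofReal s⁻¹ • pareto1.map (fun y => s * y) := by
  have hs0 : 0 < s := by linarith
  rw [restrict_Ioi_eq_restrict_Ici]
  refine Measure.ext_of_Ici _ _ fun t => ?_
  rw [Measure.restrict_apply measurableSet_Ici, Ici_inter_Ici, Measure.smul_apply,
    Measure.map_apply (by fun_prop) measurableSet_Ici]
  have h1 : (fun y => s * y) ⁻¹' Ici t = Ici (t / s) := by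
    ext y; simp [div_le_iff₀' hs0]
  rw [h1, smul_eq_mul]
  rcases le_total t s with h | h
  · rw [pareto1_Ici_le (t / s) (by rwa [div_le_one hs0]), sup_of_le_right h, pareto1_Ici _ hs, mul_one]
  · rw [pareto1_Ici (t / s) (by rwa [one_le_div hs0]), sup_of_le_left h, pareto1_Ici _ (hs.trans h),
      ← ENNReal.ofReal_mul (by positivity)]
    congr 1; field_simp

lemma pareto1_scale_pi (k : ℕ) (s : ℝ) (hs : 1 ≤ s) :
    (Measure.pi fun _ : Fin k => pareto1).restrict (Set.univ.pi fun _ => Ioi s)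
      = (ENNReal.ofReal s⁻¹) ^ k •
        (Measure.pi fun _ : Fin k => pareto1).map (fun y i => s * y i) := by
  rw [Measure.restrict_pi_pi]
  refine Measure.pi_eq fun t ht => ?_
  rw [Measure.smul_apply, Measure.map_apply (by fun_prop) (MeasurableSet.univ_pi ht)]
  have : (fun (y : Fin k → ℝ) i => s * y i) ⁻¹' (Set.univ.pi t)
      = Set.univ.pi fun i => (fun y => s * y) ⁻¹' t i := by
    ext; simp
  rw [this, Measure.pi_pi]
  simp_rw [pareto1_scale s hs, Measure.smul_apply]
  rw [smul_eq_mul]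
  simp_rw [smul_eq_mul]
  rw [Finset.prod_mul_distrib]
  congr 1
  · simp
  · refine Finset.prod_congr rfl fun i _ => ?_
    rw [Measure.map_apply (by fun_prop) (ht i)]

lemma append_map {X : Type*} [MeasurableSpace X] (μ : Measure X) [SigmaFinite μ] (k r : ℕ) :
    ((Measure.pi fun _ : Fin k => μ).prod (Measure.pi fun _ : Fin r => μ)).map
      (fun p => (Fin.append p.1 p.2 : Fin (k + r) → X)) = Measure.pi fun _ => μ := by
  refine (Measure.pi_eq fun t ht => ?_).symm
  have hm : Measurable (fun p : (Fin k → X) × (Fin r → X) =>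
      (Fin.append p.1 p.2 : Fin (k + r) → X)) := by
    refine measurable_pi_lambda _ fun i => ?_
    refine Fin.addCases (fun i => ?_) (fun i => ?_) i
    · simp only [Fin.append_left]; fun_prop
    · simp only [Fin.append_right]; fun_prop
  rw [Measure.map_apply hm (MeasurableSet.univ_pi ht)]
  have : (fun p : (Fin k → X) × (Fin r → X) =>
      (Fin.append p.1 p.2 : Fin (k + r) → X)) ⁻¹' (Set.univ.pi t)
      = (Set.univ.pi fun i => t (Fin.castAdd r i)) ×ˢ (Set.univ.pi fun i => t (Fin.natAdd k i)) := by
    ext p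
    simp only [mem_preimage, mem_univ_pi, mem_prod]
    constructor
    · intro h
      exact ⟨fun i => by simpa using h (Fin.castAdd r i), fun i => by simpa using h (Fin.natAdd k i)⟩
    · rintro ⟨h1, h2⟩ i
      refine Fin.addCases (fun i => ?_) (fun i => ?_) i
      · simpa using h1 i
      · simpa using h2 i
  rw [this, Measure.prod_prod, Measure.pi_pi, Measure.pi_pi, Fin.prod_univ_add]

lemma measurable_append {X : Type*} [MeasurableSpace X] (k r : ℕ) :
    Measurable (fun p : (Fin k → X) × (Fin r → X) =>
      (Fin.append p.1 p.2 : Fin (k + r) → X)) := by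
  refine measurable_pi_lambda _ fun i => ?_
  refine Fin.addCases (fun i => ?_) (fun i => ?_) i
  · simp only [Fin.append_left]; fun_prop
  · simp only [Fin.append_right]; fun_prop

lemma pi_ae_inj (n : ℕ) (μ : Measure ℝ) [IsProbabilityMeasure μ] [NullSingletonClass μ] :
    ∀ᵐ x ∂(Measure.pi fun _ : Fin n => μ), Function.Injective x := by
  have h : ∀ i j : Fin n, ∀ᵐ x ∂(Measure.pi fun _ : Fin n => μ), i ≠ j → x i ≠ x j := by
    intro i j
    by_cases hij : i = j
    · simp [hij]
    have hI : iIndepFun (fun (i : Fin n) (x : Fin n → ℝ) => x i) (Measure.pi fun _ : Fin n => μ) :=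
      iIndepFun_pi (X := fun _ x => x) (fun _ => aemeasurable_id)
    have h2 := (indepFun_iff_map_prod_eq_prod_map_map
      (measurable_pi_apply i).aemeasurable (measurable_pi_apply j).aemeasurable).1
      (hI.indepFun hij)
    rw [(measurePreserving_eval (fun _ : Fin n => μ) i).map_eq,
      (measurePreserving_eval (fun _ : Fin n => μ) j).map_eq] at h2
    have hd : MeasurableSet {p : ℝ × ℝ | p.1 = p.2} := measurableSet_eq_fun measurable_fst measurable_snd
    have h3 : (μ.prod μ) {p : ℝ × ℝ | p.1 = p.2} = 0 := by
      rw [Measure.measure_prod_null hd]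
      refine Filter.Eventually.of_forall fun x => ?_
      have : (Prod.mk x ⁻¹' {p : ℝ × ℝ | p.1 = p.2}) = {x} := by ext; simp [eq_comm]
      show μ _ = 0
      rw [this]; simp
    rw [← h2, Measure.map_apply (by fun_prop) hd] at h3
    rw [ae_iff]
    refine measure_mono_null ?_ h3
    intro x hx
    simp at hx ⊢
    exact hx.2
  have h' := (ae_all_iff.2 fun i => ae_all_iff.2 fun j => h i j)
  filter_upwards [h'] with x hx i j hij
  by_contra hne
  exact hx i j hne hij

lemma pi_map_perm (n : ℕ) (μ : Measure ℝ) [IsProbabilityMeasure μ] (σ : Equiv.Perm (Fin n)) :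
    (Measure.pi fun _ : Fin n => μ).map (fun x => x ∘ σ) = Measure.pi fun _ : Fin n => μ := by
  refine (Measure.pi_eq fun t ht => ?_).symm
  have hp : Measurable (fun x : Fin n → ℝ => x ∘ σ) :=
    measurable_pi_lambda _ fun i => measurable_pi_apply _
  rw [Measure.map_apply hp (MeasurableSet.univ_pi ht)]
  have : (fun x : Fin n → ℝ => x ∘ σ) ⁻¹' (Set.univ.pi t) = Set.univ.pi fun i => t (σ.symm i) := by
    ext x
    simp only [mem_preimage, mem_univ_pi, Function.comp]
    constructor
    · intro h i; simpa using h (σ.symm i)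
    · intro h i; simpa using h (σ i)
  rw [this, Measure.pi_pi]
  exact Equiv.prod_comp σ.symm (fun i => μ (t i))

lemma measurableSet_strictAnti (n : ℕ) : MeasurableSet {x : Fin n → ℝ | StrictAnti x} := by
  have : {x : Fin n → ℝ | StrictAnti x} = ⋂ i, ⋂ j, {x | i < j → x j < x i} := by
    ext x; simp [StrictAnti]
  rw [this]
  refine MeasurableSet.iInter fun i => MeasurableSet.iInter fun j => ?_
  by_cases h : i < j
  · simp only [h, true_imp_iff]
    exact measurableSet_lt (measurable_pi_apply _) (measurable_pi_apply _)
  · simp [h]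

lemma lintegral_symm (n : ℕ) (μ : Measure ℝ) [IsProbabilityMeasure μ] [NullSingletonClass μ]
    (Φ : (Fin n → ℝ) → ℝ≥0∞) (hΦ : Measurable Φ)
    (hs : ∀ (σ : Equiv.Perm (Fin n)) x, Φ (x ∘ σ) = Φ x) :
    ∫⁻ x, Φ x ∂(Measure.pi fun _ : Fin n => μ)
      = (n.factorial : ℝ≥0∞) * ∫⁻ x, ({x | StrictAnti x} : Set (Fin n → ℝ)).indicator Φ x
          ∂(Measure.pi fun _ : Fin n => μ) := by
  have hm : Measurable (({x | StrictAnti x} : Set (Fin n → ℝ)).indicator Φ) :=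
    hΦ.indicator (measurableSet_strictAnti n)
  have hp : ∀ σ : Equiv.Perm (Fin n), Measurable (fun x : Fin n → ℝ => x ∘ σ) := fun σ =>
    measurable_pi_lambda _ fun i => measurable_pi_apply _
  have h1 : ∀ᵐ x ∂(Measure.pi fun _ : Fin n => μ), Φ x
      = ∑ σ : Equiv.Perm (Fin n), ({x | StrictAnti x} : Set (Fin n → ℝ)).indicator Φ (x ∘ σ) := by
    filter_upwards [pi_ae_inj n μ] with x hx
    set τ : Equiv.Perm (Fin n) := Fin.revPerm.trans (Tuple.sort x) with hτ
    have hanti : StrictAnti (x ∘ τ) := by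
      have h1 : Antitone (x ∘ τ) := (Tuple.monotone_sort x).comp_antitone Fin.rev_anti
      exact h1.strictAnti_of_injective (hx.comp τ.injective)
    rw [Finset.sum_eq_single τ]
    · rw [indicator_of_mem (by exact hanti), hs]
    · intro σ _ hσ
      refine indicator_of_notMem (fun h => hσ ?_) _
      have h2 := Tuple.unique_antitone (f := x) (StrictAnti.antitone h) hanti.antitone
      ext i
      exact congrArg Fin.val (hx (congrFun h2 i))
    · simp
  rw [lintegral_congr_ae h1, lintegral_finsetSum 
    (f := fun (σ : Equiv.Perm (Fin n)) x => indicator _ Φ (x ∘ σ)) _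
    (fun σ _ => hm.comp (hp σ))]
  have h2 : ∀ σ : Equiv.Perm (Fin n),
      ∫⁻ x, ({x | StrictAnti x} : Set (Fin n → ℝ)).indicator Φ (x ∘ σ) ∂(Measure.pi fun _ : Fin n => μ)
      = ∫⁻ x, ({x | StrictAnti x} : Set (Fin n → ℝ)).indicator Φ x ∂(Measure.pi fun _ : Fin n => μ) := by
    intro σ
    conv_rhs => rw [← pi_map_perm n μ σ]
    rw [lintegral_map hm (hp σ)]
  simp_rw [h2]
  simp [Fintype.card_perm]

lemma gpPi_eq (γ : ℝ) (n : ℕ) :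
    gpPi γ n = (Measure.pi fun _ : Fin n => pareto1).map (fun y i => hGamma γ (y i)) := by
  unfold gpPi gpMeasure
  have := Measure.pi_map_pi (μ := fun _ : Fin n => pareto1) (f := fun _ => hGamma γ)
    (fun _ => (measurable_hGamma γ).aemeasurable)
  exact this.symm

lemma measurable_hpi (γ : ℝ) (n : ℕ) :
    Measurable (fun (y : Fin n → ℝ) i => hGamma γ (y i)) :=
  measurable_pi_lambda _ fun i => (measurable_hGamma γ).comp (measurable_pi_apply i)

lemma pareto_pi_ae (n : ℕ) : ∀ᵐ y ∂(Measure.pi fun _ : Fin n => pareto1), ∀ i, 1 < y i := by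
  rw [ae_all_iff]
  intro i
  exact (Measure.quasiMeasurePreserving_eval (μ := fun _ : Fin n => pareto1) i).ae pareto1_ae

lemma measurable_snoc (k : ℕ) :
    Measurable (fun p : (Fin k → ℝ) × ℝ => (Fin.snoc p.1 p.2 : Fin (k+1) → ℝ)) := by
  refine measurable_pi_lambda _ fun i => ?_
  refine Fin.lastCases ?_ (fun i => ?_) i
  · simp only [Fin.snoc_last]; fun_prop
  · simp only [Fin.snoc_castSucc]; fun_prop

/-- Basic integral over decreasing configurations. -/
def c0 (γ : ℝ) {k : ℕ} (K : (Fin (k+1) → ℝ) → ℝ) (F : ℝ → ℝ≥0∞) : ℝ≥0∞ :=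
  ∫⁻ u, ({x | StrictAnti x} : Set (Fin k → ℝ)).indicator
    (fun u => F (K (Fin.snoc (fun i => hGamma γ (u i)) 0))) u ∂(Measure.pi fun _ : Fin k => pareto1)

lemma strictAnti_h (γ : ℝ) {n : ℕ} (u : Fin n → ℝ) (hu : StrictAnti u) (h1 : ∀ i, 1 < u i) :
    StrictAnti (fun i => hGamma γ (u i)) := fun i j hij =>
  hGamma_strictMono γ _ _ (by linarith [h1 j]) (hu hij)

/-- The reference statistic. -/
def Rv {k : ℕ} (K : (Fin (k+1) → ℝ) → ℝ) (z : Fin k → ℝ) : ℝ := K (refVec (q := k+1) z)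

lemma measurable_Rv {k : ℕ} {K : (Fin (k+1) → ℝ) → ℝ} (hK : Measurable K) : Measurable (Rv K) :=
  hK.comp (measurable_refVec (q := k+1))

lemma ref_eq (γ : ℝ) {k : ℕ} (K : (Fin (k+1) → ℝ) → ℝ) (hK : Measurable K)
    (F : ℝ → ℝ≥0∞) (hF : Measurable F) :
    ∫⁻ z : Fin k → ℝ, F (Rv K z) ∂(gpPi γ k) = (k.factorial : ℝ≥0∞) * c0 γ K F := by
  have hm : Measurable (fun z : Fin k → ℝ => F (Rv K z)) :=
    hF.comp (measurable_Rv hK)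
  rw [gpPi_eq, lintegral_map hm (measurable_hpi γ k)]
  refine (lintegral_symm k pareto1 _ (hm.comp (measurable_hpi γ k)) ?_).trans ?_
  rotate_left
  · congr 1
    refine lintegral_congr_ae ?_
    filter_upwards [pareto_pi_ae k] with u hu
    by_cases hS : StrictAnti u
    · rw [indicator_of_mem (by exact hS), indicator_of_mem (by exact hS)]
      simp only [Function.comp, Rv]
      congr 2
      ext j
      refine Fin.lastCases ?_ (fun i => ?_) j
      · simp [refVec, descStat]
      · simp only [Fin.snoc_castSucc, refVec]
        exact descStat_antitone _ (strictAnti_h γ u hS hu).antitone _ i.2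
    · rw [indicator_of_notMem (by exact hS), indicator_of_notMem (by exact hS)]
  · intro σ x
    simp only [Function.comp, Rv]
    congr 2
    ext j
    exact descStat_perm (fun i => hGamma γ (x i)) σ j

lemma scale_eq (γ : ℝ) {k : ℕ} (K : (Fin (k+1) → ℝ) → ℝ) (hK : Measurable K)
    (hLS : LocScaleInvariant K)
    (F : ℝ → ℝ≥0∞) (hF : Measurable F) (s : ℝ) (hs : 1 ≤ s) :
    ∫⁻ u, ({x | StrictAnti x ∧ ∀ i, s < x i} : Set (Fin k → ℝ)).indicator
      (fun u => F (K (Fin.snoc (fun i => hGamma γ (u i)) (hGamma γ s)))) u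
        ∂(Measure.pi fun _ : Fin k => pareto1)
      = (ENNReal.ofReal s⁻¹) ^ k * c0 γ K F := by
  have hs0 : 0 < s := by linarith
  have h1 : ({x | StrictAnti x ∧ ∀ i, s < x i} : Set (Fin k → ℝ))
      = (Set.univ.pi fun _ => Ioi s) ∩ {x | StrictAnti x} := by
    ext x; simp [and_comm]
  have hf : Measurable (fun u : Fin k → ℝ =>
      F (K (Fin.snoc (fun i => hGamma γ (u i)) (hGamma γ s)))) := by
    refine hF.comp (hK.comp ?_)
    exact (measurable_snoc k).comp ((measurable_hpi γ k).prodMk measurable_const)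
  rw [h1, ← indicator_indicator, lintegral_indicator (MeasurableSet.univ_pi fun _ => measurableSet_Ioi),
    pareto1_scale_pi k s hs, lintegral_smul_measure, smul_eq_mul,
    lintegral_map (hf.indicator (measurableSet_strictAnti k)) (by fun_prop)]
  congr 1
  refine lintegral_congr_ae ?_
  filter_upwards [pareto_pi_ae k] with u hu
  have hiff : StrictAnti (fun i => s * u i) ↔ StrictAnti u := by
    constructor
    · intro h i j hij; exact lt_of_mul_lt_mul_left (h hij) hs0.le
    · intro h i j hij; exact mul_lt_mul_of_pos_left (h hij) hs0
  by_cases hS : StrictAnti u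
  · rw [indicator_of_mem (by exact hiff.2 hS), indicator_of_mem (by exact hS)]
    congr 1
    rw [← hLS (s ^ γ) (hGamma γ s) (Real.rpow_pos_of_pos hs0 γ) (Fin.snoc _ 0)]
    congr 1
    ext j
    refine Fin.lastCases ?_ (fun i => ?_) j
    · simp
    · simp only [Fin.snoc_castSucc]
      exact hGamma_mul γ s _ hs0 (by linarith [hu i])
  · rw [indicator_of_notMem (by exact fun h => hS (hiff.1 h)), indicator_of_notMem (by exact hS)]

lemma strictAnti_append {k r : ℕ} (u : Fin k → ℝ) (v : Fin (r+1) → ℝ) :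
    StrictAnti (Fin.append u v : Fin (k + (r+1)) → ℝ) ↔
      (StrictAnti u ∧ ∀ i, v 0 < u i) ∧ StrictAnti v := by
  constructor
  · intro h
    refine ⟨⟨fun i j hij => ?_, fun i => ?_⟩, fun i j hij => ?_⟩
    · have := h (a := Fin.castAdd (r+1) i) (b := Fin.castAdd (r+1) j) (by rw [Fin.lt_def] at hij ⊢; simpa using hij)
      simpa using this
    · have := h (a := Fin.castAdd (r+1) i) (b := Fin.natAdd k 0) (by
        rw [Fin.lt_def]; simp)
      simpa using this
    · have := h (a := Fin.natAdd k i) (b := Fin.natAdd k j) (by simpa using hij)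
      simpa using this
  · rintro ⟨⟨h1, h2⟩, h3⟩ i j
    refine Fin.addCases (fun i => ?_) (fun i => ?_) i <;>
    refine Fin.addCases (fun j => ?_) (fun j => ?_) j <;> intro hij
    · simpa using h1 (by rw [Fin.lt_def] at hij ⊢; simpa using hij)
    · simp only [Fin.append_left, Fin.append_right]
      exact lt_of_le_of_lt (h3.antitone (Fin.zero_le _)) (h2 i)
    · exfalso
      rw [Fin.lt_def] at hij; simp at hij; omega
    · simpa using h3 (by simpa using hij)

lemma main_D (γ : ℝ) {k r : ℕ} (K : (Fin (k+1) → ℝ) → ℝ) (hK : Measurable K)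
    (hLS : LocScaleInvariant K)
    (B : Set (Fin (k + (r+1)) → ℝ)) (hB : MeasurableSet B)
    (hBs : ∀ (σ : Equiv.Perm (Fin (k + (r+1)))) x, x ∘ σ ∈ B ↔ x ∈ B)
    (C : Set ℝ) (hC : MeasurableSet C)
    (hBC : ∀ y, StrictAnti y → (y ∈ B ↔ y (Fin.natAdd k 0) ∈ C)) :
    ∃ D : ℝ≥0∞, ∀ F : ℝ → ℝ≥0∞, Measurable F →
      ∫⁻ x in B, F (Km K (k + (r+1)) x) ∂(gpPi γ (k + (r+1))) = c0 γ K F * D := by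
  refine ⟨((k + (r+1)).factorial : ℝ≥0∞) *
    ∫⁻ v, ({v | StrictAnti v ∧ hGamma γ (v 0) ∈ C} : Set (Fin (r+1) → ℝ)).indicator
      (fun v => (ENNReal.ofReal (v 0)⁻¹) ^ k) v ∂(Measure.pi fun _ : Fin (r+1) => pareto1), ?_⟩
  intro F hF
  have hm : Measurable (B.indicator (fun x => F (Km K (k + (r+1)) x))) :=
    (hF.comp (measurable_Km hK _)).indicator hB
  have hmS : MeasurableSet {v : Fin (r+1) → ℝ | StrictAnti v ∧ hGamma γ (v 0) ∈ C} :=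
    (measurableSet_strictAnti _).inter (((measurable_hGamma γ).comp (measurable_pi_apply 0)) hC)
  rw [← lintegral_indicator hB, gpPi_eq, lintegral_map hm (measurable_hpi γ _)]
  refine (lintegral_symm _ pareto1 _ (hm.comp (measurable_hpi γ _)) ?_).trans ?_
  rotate_left
  · rw [mul_left_comm]
    congr 1
    have hm2 : Measurable (({x | StrictAnti x} : Set (Fin (k + (r+1)) → ℝ)).indicator
        ((B.indicator (fun x => F (Km K (k + (r+1)) x))) ∘ fun (y : Fin (k + (r+1)) → ℝ) i =>
          hGamma γ (y i))) :=
      (hm.comp (measurable_hpi γ _)).indicator (measurableSet_strictAnti _)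
    rw [← append_map pareto1 k (r+1)]
    erw [lintegral_map hm2 (measurable_append k (r+1))]
    refine (lintegral_prod_symm _ (hm2.comp (measurable_append k (r+1))).aemeasurable).trans ?_
    rw [← lintegral_const_mul]
    · refine lintegral_congr_ae ?_
      filter_upwards [pareto_pi_ae (r+1)] with v hv
      by_cases hvS : StrictAnti v ∧ hGamma γ (v 0) ∈ C
      · rw [indicator_of_mem (by exact hvS), mul_comm, ← scale_eq γ K hK hLS F hF (v 0) (hv 0).le]
        refine lintegral_congr_ae ?_
        filter_upwards [pareto_pi_ae k] with u hu
        by_cases huS : StrictAnti u ∧ ∀ i, v 0 < u i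
        · have hS : StrictAnti (Fin.append u v : Fin (k + (r+1)) → ℝ) :=
            (strictAnti_append u v).2 ⟨huS, hvS.1⟩
          have hpos : ∀ i, 1 < (Fin.append u v : Fin (k + (r+1)) → ℝ) i := by
            intro i
            refine Fin.addCases (fun i => ?_) (fun i => ?_) i
            · simpa using hu i
            · simpa using hv i
          have hA := strictAnti_h γ _ hS hpos
          rw [indicator_of_mem (by exact huS)]
          simp only [Function.comp]
          rw [indicator_of_mem (by exact hS), Function.comp_apply, indicator_of_mem]
          · congr 1
            unfold Km
            congr 1
            ext j
            rw [descStat_antitone _ hA.antitone _ (by omega)]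
            refine Fin.lastCases ?_ (fun i => ?_) j
            · have : (⟨((Fin.last k : Fin (k+1)) : ℕ), by simp⟩ : Fin (k + (r+1))) = Fin.natAdd k 0 := by
                ext; simp
              rw [this]; simp
            · have : (⟨((Fin.castSucc i : Fin (k+1)) : ℕ), by simp; omega⟩ : Fin (k + (r+1)))
                  = Fin.castAdd (r+1) i := by
                ext; simp
              rw [this]; simp
          · rw [hBC _ hA]; simpa using hvS.2
        · rw [indicator_of_notMem (by exact huS)]
          simp only [Function.comp]
          rw [indicator_of_notMem]
          exact fun h => huS ((strictAnti_append u v).1 h).1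
      · rw [indicator_of_notMem (by exact hvS), mul_zero]
        rw [lintegral_eq_zero_iff' (by
          exact ((hm2.comp (measurable_append k (r+1))).comp measurable_prodMk_right).aemeasurable)]
        filter_upwards [pareto_pi_ae k] with u hu
        simp only [Function.comp]
        by_cases hS : StrictAnti (Fin.append u v : Fin (k + (r+1)) → ℝ)
        · have hpos : ∀ i, 1 < (Fin.append u v : Fin (k + (r+1)) → ℝ) i := by
            intro i
            refine Fin.addCases (fun i => ?_) (fun i => ?_) i
            · simpa using hu i
            · simpa using hv i
          have hA := strictAnti_h γ _ hS hpos
          rw [indicator_of_mem (by exact hS), Function.comp_apply, indicator_of_notMem]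
          · rfl
          · rw [hBC _ hA]
            intro h
            exact hvS ⟨((strictAnti_append u v).1 hS).2, by simpa using h⟩
        · rw [indicator_of_notMem (by exact hS)]; rfl
    · exact (by fun_prop : Measurable fun v : Fin (r+1) → ℝ =>
        (ENNReal.ofReal (v 0)⁻¹) ^ k).indicator hmS
  · intro σ x
    simp only [Function.comp]
    have h1 := hBs σ (fun i => hGamma γ (x i))
    have h2 := Km_perm K _ (fun i => hGamma γ (x i)) σ
    simp only [indicator]
    have e : (fun i => hGamma γ (x i)) ∘ σ = fun i => hGamma γ (x (σ i)) := rfl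
    rw [e] at h1 h2
    rw [h2]
    exact if_congr h1 rfl rfl

lemma main_lintegral (γ : ℝ) {k r : ℕ} (K : (Fin (k+1) → ℝ) → ℝ) (hK : Measurable K)
    (hLS : LocScaleInvariant K)
    (B : Set (Fin (k + (r+1)) → ℝ)) (hB : MeasurableSet B)
    (hBs : ∀ (σ : Equiv.Perm (Fin (k + (r+1)))) x, x ∘ σ ∈ B ↔ x ∈ B)
    (C : Set ℝ) (hC : MeasurableSet C)
    (hBC : ∀ y, StrictAnti y → (y ∈ B ↔ y (Fin.natAdd k 0) ∈ C))
    (F : ℝ → ℝ≥0∞) (hF : Measurable F) :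
    ∫⁻ x in B, F (Km K (k + (r+1)) x) ∂(gpPi γ (k + (r+1)))
      = gpPi γ (k + (r+1)) B * ∫⁻ z : Fin k → ℝ, F (Rv K z) ∂(gpPi γ k) := by
  obtain ⟨D, hD⟩ := main_D γ K hK hLS B hB hBs C hC hBC
  have h1 := hD (fun _ => 1) measurable_const
  have h2 := ref_eq γ K hK (fun _ => 1) measurable_const
  simp at h1 h2
  rw [hD F hF, h1, ref_eq γ K hK F hF]
  calc c0 γ K F * D = c0 γ K F * D * 1 := by ring
    _ = c0 γ K F * D * ((k.factorial : ℝ≥0∞) * c0 γ K fun _ => 1) := by rw [← h2]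
    _ = _ := by ring

lemma main_map (γ : ℝ) {k r : ℕ} (K : (Fin (k+1) → ℝ) → ℝ) (hK : Measurable K)
    (hLS : LocScaleInvariant K)
    (B : Set (Fin (k + (r+1)) → ℝ)) (hB : MeasurableSet B)
    (hBs : ∀ (σ : Equiv.Perm (Fin (k + (r+1)))) x, x ∘ σ ∈ B ↔ x ∈ B)
    (C : Set ℝ) (hC : MeasurableSet C)
    (hBC : ∀ y, StrictAnti y → (y ∈ B ↔ y (Fin.natAdd k 0) ∈ C)) :
    ((gpPi γ (k + (r+1))).restrict B).map (Km K (k + (r+1)))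
      = gpPi γ (k + (r+1)) B • (gpPi γ k).map (Rv K) := by
  refine Measure.ext_of_lintegral _ fun F hF => ?_
  rw [lintegral_map hF (measurable_Km hK _), lintegral_smul_measure, smul_eq_mul,
    lintegral_map hF (measurable_Rv hK)]
  exact main_lintegral γ K hK hLS B hB hBs C hC hBC F hF

lemma law_Km (γ : ℝ) {k N : ℕ} (hN : k + 1 ≤ N) (K : (Fin (k+1) → ℝ) → ℝ) (hK : Measurable K)
    (hLS : LocScaleInvariant K) :
    (gpPi γ N).map (Km K N) = (gpPi γ k).map (Rv K) := by
  obtain ⟨r, rfl⟩ : ∃ r, N = k + (r + 1) := ⟨N - k - 1, by omega⟩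
  have := main_map γ K hK hLS (r := r) Set.univ MeasurableSet.univ (by simp) Set.univ
    MeasurableSet.univ (by simp)
  simpa using this

lemma law_Km_restrict (γ : ℝ) {k N : ℕ} (hN : k + 1 ≤ N) (K : (Fin (k+1) → ℝ) → ℝ)
    (hK : Measurable K) (hLS : LocScaleInvariant K) (z : ℝ) :
    ∫ x in {x : Fin N → ℝ | k + 1 ≤ cntGt x z}, Km K N x ∂(gpPi γ N)
      = (gpPi γ N).real {x : Fin N → ℝ | k + 1 ≤ cntGt x z} * ∫ u, Rv K u ∂(gpPi γ k) := by
  obtain ⟨r, rfl⟩ : ∃ r, N = k + (r + 1) := ⟨N - k - 1, by omega⟩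
  have hB : MeasurableSet {x : Fin (k + (r+1)) → ℝ | k + 1 ≤ cntGt x z} :=
    measurable_cntGt z (measurableSet_Ici (a := k + 1))
  have := main_map γ K hK hLS (r := r) {x : Fin (k + (r+1)) → ℝ | k + 1 ≤ cntGt x z} hB
    (by intro σ x; simp [cntGt_perm]) (Ioi z) measurableSet_Ioi (by
      intro y hy
      have h := lt_cntGt_iff y hy.antitone k (by omega) z
      simp only [mem_ofPred_eq, mem_Ioi]
      rw [Nat.succ_le_iff, h]
      rfl)
  calc ∫ x in {x : Fin (k + (r+1)) → ℝ | k + 1 ≤ cntGt x z}, Km K (k + (r+1)) x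
        ∂(gpPi γ (k + (r+1)))
      = ∫ t, t ∂(((gpPi γ (k + (r+1))).restrict {x | k + 1 ≤ cntGt x z}).map
          (Km K (k + (r+1)))) := by
        rw [integral_map (measurable_Km hK _).aemeasurable (by fun_prop)]
    _ = _ := by
        rw [this, integral_smul_measure, integral_map (measurable_Rv hK).aemeasurable (by fun_prop)]
        simp [Measure.real]

lemma snoc_map {X : Type*} [MeasurableSpace X] (μ : Measure X) [SigmaFinite μ] (n : ℕ) :
    (μ.prod (Measure.pi fun _ : Fin n => μ)).map
      (fun p => (Fin.snoc p.2 p.1 : Fin (n+1) → X)) = Measure.pi fun _ => μ := by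
  have hm : Measurable (fun p : X × (Fin n → X) => (Fin.snoc p.2 p.1 : Fin (n+1) → X)) := by
    refine measurable_pi_lambda _ fun i => ?_
    refine Fin.lastCases ?_ (fun i => ?_) i
    · simp only [Fin.snoc_last]; fun_prop
    · simp only [Fin.snoc_castSucc]; fun_prop
  refine (Measure.pi_eq fun t ht => ?_).symm
  rw [Measure.map_apply hm (MeasurableSet.univ_pi ht)]
  have : (fun p : X × (Fin n → X) => (Fin.snoc p.2 p.1 : Fin (n+1) → X)) ⁻¹' (Set.univ.pi t)
      = t (Fin.last n) ×ˢ (Set.univ.pi fun i : Fin n => t i.castSucc) := by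
    ext p
    simp only [mem_preimage, mem_univ_pi, mem_prod]
    constructor
    · intro h
      exact ⟨by simpa using h (Fin.last n), fun i => by simpa using h i.castSucc⟩
    · rintro ⟨h1, h2⟩ i
      refine Fin.lastCases ?_ (fun i => ?_) i
      · simpa using h1
      · simpa using h2 i
  rw [this, Measure.prod_prod, Measure.pi_pi, Fin.prod_univ_castSucc, mul_comm]

lemma cons_map {X : Type*} [MeasurableSpace X] (μ : Measure X) [SigmaFinite μ] (n : ℕ) :
    (μ.prod (Measure.pi fun _ : Fin n => μ)).map
      (fun p => (Fin.cons p.1 p.2 : Fin (n+1) → X)) = Measure.pi fun _ => μ := by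
  have hm : Measurable (fun p : X × (Fin n → X) => (Fin.cons p.1 p.2 : Fin (n+1) → X)) := by
    refine measurable_pi_lambda _ fun i => ?_
    refine Fin.cases ?_ (fun i => ?_) i
    · simp only [Fin.cons_zero]; fun_prop
    · simp only [Fin.cons_succ]; fun_prop
  refine (Measure.pi_eq fun t ht => ?_).symm
  rw [Measure.map_apply hm (MeasurableSet.univ_pi ht)]
  have : (fun p : X × (Fin n → X) => (Fin.cons p.1 p.2 : Fin (n+1) → X)) ⁻¹' (Set.univ.pi t)
      = t 0 ×ˢ (Set.univ.pi fun i : Fin n => t i.succ) := by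
    ext p
    simp only [mem_preimage, mem_univ_pi, mem_prod]
    constructor
    · intro h
      exact ⟨by simpa using h 0, fun i => by simpa using h i.succ⟩
    · rintro ⟨h1, h2⟩ i
      refine Fin.cases ?_ (fun i => ?_) i
      · simpa using h1
      · simpa using h2 i
  rw [this, Measure.prod_prod, Measure.pi_pi, Fin.prod_univ_succ]

lemma gpPi_ae_inj (γ : ℝ) (n : ℕ) : ∀ᵐ x ∂(gpPi γ n), Function.Injective x := by
  have hms : MeasurableSet {x : Fin n → ℝ | Function.Injective x} := by
    have : {x : Fin n → ℝ | Function.Injective x} = ⋂ i, ⋂ j, {x | x i = x j → i = j} := by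
      ext x; simp [Function.Injective]
    rw [this]
    refine MeasurableSet.iInter fun i => MeasurableSet.iInter fun j => ?_
    by_cases h : i = j
    · simp [h]
    · simp only [h, imp_false]
      exact (measurableSet_eq_fun (measurable_pi_apply i) (measurable_pi_apply j)).compl
  rw [gpPi_eq, ae_map_iff (measurable_hpi γ n).aemeasurable hms]
  filter_upwards [pi_ae_inj n pareto1, pareto_pi_ae n] with y h1 h2 i j hij
  by_contra hne
  rcases lt_or_gt_of_ne (fun h => hne (h1 h) : y i ≠ y j) with h | h
  · exact absurd hij (hGamma_strictMono γ _ _ (by linarith [h2 i]) h).ne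
  · exact absurd hij (hGamma_strictMono γ _ _ (by linarith [h2 j]) h).ne'

lemma top_count {n : ℕ} (q : ℕ) (x : Fin n → ℝ) (hx : Function.Injective x) :
    ∑ i, (if cntGt x (x i) < q then 1 else 0 : ℕ) ≤ q := by
  set τ : Equiv.Perm (Fin n) := Fin.revPerm.trans (Tuple.sort x) with hτ
  have hanti : StrictAnti (x ∘ τ) := by
    have h1 : Antitone (x ∘ τ) := (Tuple.monotone_sort x).comp_antitone Fin.rev_anti
    exact h1.strictAnti_of_injective (hx.comp τ.injective)
  rw [← Equiv.sum_comp τ, ← Finset.card_filter]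
  have hsub : (Finset.univ.filter fun i => cntGt x (x (τ i)) < q)
      ⊆ Finset.univ.filter fun i : Fin n => (i : ℕ) < q := by
    intro i hi
    simp only [Finset.mem_filter, Finset.mem_univ, true_and] at hi ⊢
    refine lt_of_le_of_lt ?_ hi
    by_contra hlt
    push Not at hlt
    have h := lt_cntGt_iff (x ∘ τ) hanti.antitone (cntGt x (x (τ i))) (hlt.trans i.2) (x (τ i))
    rw [cntGt_perm] at h
    exact absurd (h.2 (hanti (by rw [Fin.lt_def]; exact hlt))) (lt_irrefl _)
  refine (Finset.card_le_card hsub).trans ?_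
  calc (Finset.univ.filter fun i : Fin n => (i : ℕ) < q).card
      = ((Finset.univ.filter fun i : Fin n => (i : ℕ) < q).image Fin.val).card :=
        (Finset.card_image_of_injective _ Fin.val_injective).symm
    _ ≤ (Finset.range q).card := Finset.card_le_card (by
        intro a ha
        simp only [Finset.mem_image, Finset.mem_filter] at ha
        obtain ⟨b, hb, rfl⟩ := ha
        simpa using hb.2)
    _ = q := Finset.card_range q

lemma top_prob (γ : ℝ) (n q : ℕ) (i : Fin n) :
    (n : ℝ≥0∞) * gpPi γ n {x | cntGt x (x i) < q} ≤ q := by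
  have hms : ∀ j : Fin n, MeasurableSet {x : Fin n → ℝ | cntGt x (x j) < q} := fun j =>
    (measurable_cntGt2.comp (measurable_id.prodMk (measurable_pi_apply j)))
      (measurableSet_Iio (a := q))
  have heq : ∀ j : Fin n, gpPi γ n {x | cntGt x (x j) < q} = gpPi γ n {x | cntGt x (x i) < q} := by
    intro j
    have hp : Measurable (fun x : Fin n → ℝ => x ∘ (Equiv.swap i j)) :=
      measurable_pi_lambda _ fun _ => measurable_pi_apply _
    have := pi_map_perm n (gpMeasure γ) (Equiv.swap i j)
    have h2 : (gpPi γ n).map (fun x => x ∘ (Equiv.swap i j)) = gpPi γ n := this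
    conv_rhs => rw [← h2, Measure.map_apply hp (hms i)]
    congr 1
    ext x
    simp [cntGt_perm]
  calc (n : ℝ≥0∞) * gpPi γ n {x | cntGt x (x i) < q}
      = ∑ j, gpPi γ n {x | cntGt x (x j) < q} := by simp [heq]
    _ = ∑ j, ∫⁻ x, ({x | cntGt x (x j) < q} : Set (Fin n → ℝ)).indicator 1 x ∂(gpPi γ n) := by
        simp_rw [lintegral_indicator_one (hms _)]
    _ = ∫⁻ x, ∑ j, ({x | cntGt x (x j) < q} : Set (Fin n → ℝ)).indicator 1 x ∂(gpPi γ n) := by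
        rw [lintegral_finsetSum]
        exact fun j _ => measurable_one.indicator (hms j)
    _ ≤ ∫⁻ _, q ∂(gpPi γ n) := by
        refine lintegral_mono_ae ?_
        filter_upwards [gpPi_ae_inj γ n] with x hx
        have h := top_count q x hx
        have h' : ((∑ i, (if cntGt x (x i) < q then 1 else 0 : ℕ) : ℕ) : ℝ≥0∞) ≤ q := by
          exact_mod_cast h
        refine le_trans (le_of_eq ?_) h'
        push_cast
        refine Finset.sum_congr rfl fun j _ => ?_
        simp [indicator]
    _ = q := by simp

lemma holder3 {Ω : Type*} [MeasurableSpace Ω] (μ : Measure Ω)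
    (X Y : Ω → ℝ) (hX : Measurable X) (hY : Measurable Y) (S : Set Ω) (hS : MeasurableSet S)
    (a : ℝ) (ha : 2 < a) (I : ℝ≥0∞)
    (hXI : ∫⁻ ω, ENNReal.ofReal (|X ω| ^ a) ∂μ = I) (hYI : ∫⁻ ω, ENNReal.ofReal (|Y ω| ^ a) ∂μ = I) :
    ∫⁻ ω in S, ENNReal.ofReal |X ω * Y ω| ∂μ ≤ I ^ (1/a) * I ^ (1/a) * μ S ^ (1 - 2/a) := by
  have ha0 : 0 < a := by linarith
  have h2a : 0 < 1 - 2/a := by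
    have : 2 / a < 1 := by rw [div_lt_one ha0]; exact ha
    linarith
  have key := ENNReal.lintegral_prod_norm_pow_le (μ := μ) (Finset.univ : Finset (Fin 3))
    (f := ![fun ω => ENNReal.ofReal (|X ω| ^ a), fun ω => ENNReal.ofReal (|Y ω| ^ a),
      S.indicator 1]) (p := ![1/a, 1/a, 1 - 2/a]) (by
        intro i _
        fin_cases i
        · simp; fun_prop
        · simp; fun_prop
        · simp; exact (measurable_one.indicator hS).aemeasurable)
      (by simp [Fin.sum_univ_three]; ring)
      (by
        intro i _
        fin_cases i
        · simp; positivity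
        · simp; positivity
        · simpa using h2a.le)
  simp only [Fin.prod_univ_three, Matrix.cons_val_zero, Matrix.cons_val_one, Matrix.cons_val] at key
  rw [hXI, hYI, lintegral_indicator_one hS] at key
  refine le_trans (le_of_eq ?_) key
  rw [← lintegral_indicator hS]
  refine lintegral_congr fun ω => ?_
  have e : ∀ t : ℝ, ENNReal.ofReal (|t| ^ a) ^ (1/a) = ENNReal.ofReal |t| := by
    intro t
    rw [ENNReal.ofReal_rpow_of_nonneg (by positivity) (by positivity), ← Real.rpow_mul (abs_nonneg _)]
    congr 1
    rw [mul_one_div_cancel ha0.ne', Real.rpow_one]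
  rw [e, e, ← ENNReal.ofReal_mul (abs_nonneg _), ← abs_mul]
  by_cases h : ω ∈ S
  · simp [h]
  · simp [h, h2a]

/-- Law of `(shared variable, (left block, right block))`. -/
def Qm (γ : ℝ) (n : ℕ) : Measure (ℝ × ((Fin n → ℝ) × (Fin n → ℝ))) :=
  (gpMeasure γ).prod ((gpPi γ n).prod (gpPi γ n))

instance (γ : ℝ) (n : ℕ) : IsProbabilityMeasure (Qm γ n) := by unfold Qm; infer_instance

/-- left vector -/
def vL {n : ℕ} (p : ℝ × ((Fin n → ℝ) × (Fin n → ℝ))) : Fin (n+1) → ℝ := Fin.snoc p.2.1 p.1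

/-- right vector -/
def vR {n : ℕ} (p : ℝ × ((Fin n → ℝ) × (Fin n → ℝ))) : Fin (n+1) → ℝ := Fin.snoc p.2.2 p.1

lemma measurable_vL {n : ℕ} : Measurable (vL (n := n)) :=
  (measurable_snoc n).comp (measurable_snd.fst.prodMk measurable_fst)

lemma measurable_vR {n : ℕ} : Measurable (vR (n := n)) :=
  (measurable_snoc n).comp (measurable_snd.snd.prodMk measurable_fst)

lemma law_vL (γ : ℝ) (n : ℕ) : (Qm γ n).map vL = gpPi γ (n+1) := by
  have h : (Qm γ n).map (Prod.map id Prod.fst) = (gpMeasure γ).prod (gpPi γ n) := by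
    unfold Qm
    rw [← Measure.map_prod_map _ _ measurable_id measurable_fst]
    simp
  have h2 := snoc_map (gpMeasure γ) n
  have hm : Measurable (fun p : ℝ × (Fin n → ℝ) => (Fin.snoc p.2 p.1 : Fin (n+1) → ℝ)) :=
    (measurable_snoc n).comp (measurable_snd.prodMk measurable_fst)
  change ((gpMeasure γ).prod (gpPi γ n)).map _ = gpPi γ (n+1) at h2
  rw [← h, Measure.map_map hm (measurable_id.prodMap measurable_fst)] at h2
  exact h2

lemma law_vR (γ : ℝ) (n : ℕ) : (Qm γ n).map vR = gpPi γ (n+1) := by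
  have h : (Qm γ n).map (Prod.map id Prod.snd) = (gpMeasure γ).prod (gpPi γ n) := by
    unfold Qm
    rw [← Measure.map_prod_map _ _ measurable_id measurable_snd]
    simp
  have h2 := snoc_map (gpMeasure γ) n
  have hm : Measurable (fun p : ℝ × (Fin n → ℝ) => (Fin.snoc p.2 p.1 : Fin (n+1) → ℝ)) :=
    (measurable_snoc n).comp (measurable_snd.prodMk measurable_fst)
  change ((gpMeasure γ).prod (gpPi γ n)).map _ = gpPi γ (n+1) at h2
  rw [← h, Measure.map_map hm (measurable_id.prodMap measurable_snd)] at h2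
  exact h2

lemma law_KL (γ : ℝ) {k n : ℕ} (hn : k ≤ n) (K : (Fin (k+1) → ℝ) → ℝ) (hK : Measurable K)
    (hLS : LocScaleInvariant K) :
    (Qm γ n).map (fun p => Km K (n+1) (vL p)) = (gpPi γ k).map (Rv K) := by
  rw [← law_Km γ (N := n+1) (by omega) K hK hLS, ← law_vL,
    Measure.map_map (measurable_Km hK _) measurable_vL]
  rfl

lemma law_KR (γ : ℝ) {k n : ℕ} (hn : k ≤ n) (K : (Fin (k+1) → ℝ) → ℝ) (hK : Measurable K)
    (hLS : LocScaleInvariant K) :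
    (Qm γ n).map (fun p => Km K (n+1) (vR p)) = (gpPi γ k).map (Rv K) := by
  rw [← law_Km γ (N := n+1) (by omega) K hK hLS, ← law_vR,
    Measure.map_map (measurable_Km hK _) measurable_vR]
  rfl

lemma measurableSet_cnt (n q : ℕ) :
    MeasurableSet {x : Fin (n+1) → ℝ | cntGt x (x (Fin.last n)) < q} :=
  (measurable_cntGt2.comp (measurable_id.prodMk (measurable_pi_apply (Fin.last n))))
      (measurableSet_Iio (a := q))

/-- exceptional event -/
def Sx (n q : ℕ) : Set (ℝ × ((Fin n → ℝ) × (Fin n → ℝ))) :=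
  vL ⁻¹' {x | cntGt x (x (Fin.last n)) < q} ∪ vR ⁻¹' {x | cntGt x (x (Fin.last n)) < q}

lemma mem_Sx_compl {n q : ℕ} (p : ℝ × ((Fin n → ℝ) × (Fin n → ℝ))) :
    p ∈ (Sx n q)ᶜ ↔ q ≤ cntGt p.2.1 p.1 ∧ q ≤ cntGt p.2.2 p.1 := by
  simp [Sx, vL, vR, cntGt_snoc]

lemma measurableSet_Sx (n q : ℕ) : MeasurableSet (Sx n q) :=
  (measurable_vL (measurableSet_cnt n q)).union (measurable_vR (measurableSet_cnt n q))

lemma Sx_prob (γ : ℝ) (n q : ℕ) :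
    Qm γ n (Sx n q) ≤ ENNReal.ofReal (2 * q / (n + 1 : ℕ)) := by
  have h := top_prob γ (n+1) q (Fin.last n)
  have h1 : gpPi γ (n+1) {x | cntGt x (x (Fin.last n)) < q} ≤ (q : ℝ≥0∞) / (n + 1 : ℕ) := by
    rw [ENNReal.le_div_iff_mul_le (by simp) (by simp), mul_comm]
    exact h
  have h2 : Qm γ n (Sx n q) ≤ (q : ℝ≥0∞) / (n + 1 : ℕ) + (q : ℝ≥0∞) / (n + 1 : ℕ) := by
    refine (measure_union_le _ _).trans (add_le_add ?_ ?_)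
    · rwa [← Measure.map_apply measurable_vL (measurableSet_cnt n q), law_vL]
    · rwa [← Measure.map_apply measurable_vR (measurableSet_cnt n q), law_vR]
  refine h2.trans (le_of_eq ?_)
  rw [ENNReal.ofReal_div_of_pos (by positivity), ENNReal.ofReal_mul (by norm_num),
    ENNReal.ofReal_natCast, ENNReal.ofReal_natCast, ← two_mul, ← mul_div_assoc]
  simp

lemma compl_integral (γ : ℝ) {k n : ℕ} (hn : k + 1 ≤ n) (K : (Fin (k+1) → ℝ) → ℝ)
    (hK : Measurable K) (hLS : LocScaleInvariant K)
    (hint : Integrable (fun p => Km K (n+1) (vL p) * Km K (n+1) (vR p)) (Qm γ n)) :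
    ∫ p in (Sx n (k+1))ᶜ, Km K (n+1) (vL p) * Km K (n+1) (vR p) ∂(Qm γ n)
      ≤ (∫ u, Rv K u ∂(gpPi γ k)) ^ 2 := by
  set θ := ∫ u, Rv K u ∂(gpPi γ k) with hθ
  have hS := (measurableSet_Sx n (k+1)).compl
  set B : ℝ → Set (Fin n → ℝ) := fun z => {x | k + 1 ≤ cntGt x z} with hBdef
  have hB : ∀ z, MeasurableSet (B z) := fun z => measurable_cntGt z (measurableSet_Ici (a := k+1))
  have hkm : ∀ (x : Fin n → ℝ) (z : ℝ), k + 1 ≤ cntGt x z →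
      Km K (n+1) (Fin.snoc x z) = Km K n x := by
    intro x z h
    unfold Km
    congr 1
    ext j
    exact descStat_snoc x z h j j.2
  have hpt : ∀ p : ℝ × ((Fin n → ℝ) × (Fin n → ℝ)),
      (Sx n (k+1))ᶜ.indicator (fun p => Km K (n+1) (vL p) * Km K (n+1) (vR p)) p
        = (B p.1).indicator (Km K n) p.2.1 * (B p.1).indicator (Km K n) p.2.2 := by
    intro p
    by_cases h : p ∈ (Sx n (k+1))ᶜ
    · rw [indicator_of_mem h]
      rw [mem_Sx_compl] at h
      rw [indicator_of_mem (by exact h.1), indicator_of_mem (by exact h.2)]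
      simp only [vL, vR]
      rw [hkm _ _ h.1, hkm _ _ h.2]
    · rw [indicator_of_notMem h]
      rw [mem_Sx_compl, not_and_or] at h
      rcases h with h | h
      · rw [indicator_of_notMem (s := B p.1) (a := p.2.1) (by exact h), zero_mul]
      · rw [indicator_of_notMem (s := B p.1) (a := p.2.2) (by exact h), mul_zero]
  rw [← integral_indicator hS]
  have hint2 := hint.indicator hS
  unfold Qm at hint2 ⊢
  rw [integral_prod _ hint2]
  have hz : ∀ z : ℝ, ∫ y : (Fin n → ℝ) × (Fin n → ℝ),
      (Sx n (k+1))ᶜ.indicator (fun p => Km K (n+1) (vL p) * Km K (n+1) (vR p)) (z, y)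
        ∂((gpPi γ n).prod (gpPi γ n)) = ((gpPi γ n).real (B z) * θ) ^ 2 := by
    intro z
    simp_rw [hpt]
    rw [integral_prod_mul ((B z).indicator (Km K n)) ((B z).indicator (Km K n)),
      integral_indicator (hB z), law_Km_restrict γ hn K hK hLS z, sq]
  simp_rw [hz]
  calc ∫ z, ((gpPi γ n).real (B z) * θ) ^ 2 ∂(gpMeasure γ)
      ≤ ∫ _, θ ^ 2 ∂(gpMeasure γ) := by
        refine integral_mono_of_nonneg (Eventually.of_forall fun z => sq_nonneg _)
          (integrable_const _) (Eventually.of_forall fun z => ?_)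
        simp only
        rw [mul_pow]
        have h0 : 0 ≤ (gpPi γ n).real (B z) := measureReal_nonneg
        have h1 : (gpPi γ n).real (B z) ≤ 1 := measureReal_le_one
        have : (gpPi γ n).real (B z) ^ 2 ≤ 1 := pow_le_one₀ h0 h1
        exact mul_le_of_le_one_left (sq_nonneg _) this
    _ = θ ^ 2 := by simp

lemma core (γ : ℝ) {k n : ℕ} (hn : k ≤ n) (K : (Fin (k+1) → ℝ) → ℝ) (hK : Measurable K)
    (hLS : LocScaleInvariant K) (hMom : MomentCond γ K) (a : ℝ) (ha : 2 < a) :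
    (∫ p, Km K (n+1) (vL p) * Km K (n+1) (vR p) ∂(Qm γ n))
      - (∫ p, Km K (n+1) (vL p) ∂(Qm γ n)) * (∫ p, Km K (n+1) (vR p) ∂(Qm γ n))
      ≤ (2 * ((k + 1 : ℕ) : ℝ)) ^ (1 - 2/a) * (normKa γ K a) ^ 2 * ((n + 1 : ℕ) : ℝ) ^ (2/a - 1) := by
  have ha0 : 0 < a := by linarith
  have h2a : 0 < 1 - 2/a := by
    have : 2 / a < 1 := by rw [div_lt_one ha0]; exact ha
    linarith
  set X := fun p : ℝ × ((Fin n → ℝ) × (Fin n → ℝ)) => Km K (n+1) (vL p) with hXdef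
  set Y := fun p : ℝ × ((Fin n → ℝ) × (Fin n → ℝ)) => Km K (n+1) (vR p) with hYdef
  have hX : Measurable X := (measurable_Km hK _).comp measurable_vL
  have hY : Measurable Y := (measurable_Km hK _).comp measurable_vR
  set I := ∫⁻ u, ENNReal.ofReal (|Rv K u| ^ a) ∂(gpPi γ k) with hI
  have hItop : I < ⊤ := hMom a ha0
  have hFm : Measurable (fun t : ℝ => ENNReal.ofReal (|t| ^ a)) := by fun_prop
  have hXI : ∫⁻ p, ENNReal.ofReal (|X p| ^ a) ∂(Qm γ n) = I := by
    rw [← lintegral_map hFm hX, law_KL γ hn K hK hLS, lintegral_map hFm (measurable_Rv hK)]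
  have hYI : ∫⁻ p, ENNReal.ofReal (|Y p| ^ a) ∂(Qm γ n) = I := by
    rw [← lintegral_map hFm hY, law_KR γ hn K hK hLS, lintegral_map hFm (measurable_Rv hK)]
  have hXθ : ∫ p, X p ∂(Qm γ n) = ∫ u, Rv K u ∂(gpPi γ k) := by
    have h1 := integral_map (μ := Qm γ n) hX.aemeasurable (f := fun t : ℝ => t) (by fun_prop)
    have h2 := integral_map (μ := gpPi γ k) (measurable_Rv hK).aemeasurable
      (f := fun t : ℝ => t) (by fun_prop)
    rw [← h1, ← h2, law_KL γ hn K hK hLS]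
  have hYθ : ∫ p, Y p ∂(Qm γ n) = ∫ u, Rv K u ∂(gpPi γ k) := by
    have h1 := integral_map (μ := Qm γ n) hY.aemeasurable (f := fun t : ℝ => t) (by fun_prop)
    have h2 := integral_map (μ := gpPi γ k) (measurable_Rv hK).aemeasurable
      (f := fun t : ℝ => t) (by fun_prop)
    rw [← h1, ← h2, law_KR γ hn K hK hLS]
  have hHold := fun S hS => holder3 (Qm γ n) X Y hX hY S hS a ha I hXI hYI
  have hI1 : I ^ (1/a) ≠ ⊤ := ENNReal.rpow_ne_top_of_nonneg (by positivity) hItop.ne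
  have hint : Integrable (fun p => X p * Y p) (Qm γ n) := by
    refine ⟨(hX.mul hY).aestronglyMeasurable, ?_⟩
    rw [hasFiniteIntegral_iff_norm]
    have h := hHold Set.univ MeasurableSet.univ
    rw [Measure.restrict_univ] at h
    simp only [Real.norm_eq_abs]
    refine lt_of_le_of_lt h ?_
    simp only [measure_univ, ENNReal.one_rpow, mul_one]
    exact ENNReal.mul_lt_top hI1.lt_top hI1.lt_top
  have hnorm : normKa γ K a = (I ^ (1/a)).toReal := by
    rw [← ENNReal.toReal_rpow, normKa, hI]
    congr 1
    exact integral_eq_lintegral_of_nonneg_ae (Eventually.of_forall fun z => by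
      simp only [Pi.zero_apply]; positivity) (by
      have : Measurable fun u => |Rv K u| ^ a := by
        have := measurable_Rv hK
        fun_prop
      exact this.aestronglyMeasurable)
  -- existence of a suitable exceptional set
  obtain ⟨S, hS, hSp, hSb⟩ : ∃ S : Set (ℝ × ((Fin n → ℝ) × (Fin n → ℝ))), MeasurableSet S ∧
      Qm γ n S ≤ ENNReal.ofReal (2 * (k + 1 : ℕ) / (n + 1 : ℕ)) ∧
      ∫ p in Sᶜ, X p * Y p ∂(Qm γ n) ≤ (∫ u, Rv K u ∂(gpPi γ k)) ^ 2 := by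
    rcases Nat.lt_or_ge k n with h | h
    · exact ⟨Sx n (k+1), measurableSet_Sx _ _, Sx_prob γ n (k+1),
        compl_integral γ h K hK hLS hint⟩
    · obtain rfl : k = n := le_antisymm hn h
      refine ⟨Set.univ, MeasurableSet.univ, ?_, ?_⟩
      · rw [measure_univ, mul_div_assoc, div_self (by positivity)]
        simp
      · simp [sq_nonneg]
  have hsplit := integral_add_compl hS hint
  have hle : ∫ p in S, X p * Y p ∂(Qm γ n)
      ≤ (normKa γ K a) ^ 2 * (2 * (k + 1 : ℕ) / (n + 1 : ℕ) : ℝ) ^ (1 - 2/a) := by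
    calc ∫ p in S, X p * Y p ∂(Qm γ n) ≤ ‖∫ p in S, X p * Y p ∂(Qm γ n)‖ := Real.le_norm_self _
      _ ≤ (∫⁻ p in S, ENNReal.ofReal ‖X p * Y p‖ ∂(Qm γ n)).toReal :=
        norm_integral_le_lintegral_norm _
      _ ≤ (I ^ (1/a) * I ^ (1/a) *
          ENNReal.ofReal ((2 * (k + 1 : ℕ) / (n + 1 : ℕ) : ℝ) ^ (1 - 2/a))).toReal := by
        refine ENNReal.toReal_mono ?_ ((hHold S hS).trans ?_)
        · exact ENNReal.mul_ne_top (ENNReal.mul_ne_top hI1 hI1) ENNReal.ofReal_ne_top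
        · rw [← ENNReal.ofReal_rpow_of_nonneg (by positivity) h2a.le]
          gcongr
      _ = _ := by
        rw [ENNReal.toReal_mul, ENNReal.toReal_mul, ← hnorm,
          ENNReal.toReal_ofReal (by positivity)]
        ring
  have hfin : (normKa γ K a) ^ 2 * (2 * (k + 1 : ℕ) / (n + 1 : ℕ) : ℝ) ^ (1 - 2/a)
      = (2 * ((k + 1 : ℕ) : ℝ)) ^ (1 - 2/a) * (normKa γ K a) ^ 2
        * ((n + 1 : ℕ) : ℝ) ^ (2/a - 1) := by
    rw [Real.div_rpow (by positivity) (by positivity), show 2/a - 1 = -(1 - 2/a) by ring,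
      Real.rpow_neg (by positivity)]
    ring
  rw [← hfin, hXθ, hYθ]
  nlinarith [hsplit, hle, hSb]

lemma law_joint {Ω : Type*} [MeasurableSpace Ω] (P : Measure Ω) [IsProbabilityMeasure P]
    (γ : ℝ) (Z : ℕ → Ω → ℝ) (hZmeas : ∀ i, Measurable (Z i))
    (hIndep : iIndepFun Z P)
    (hDist : ∀ i, Measure.map (Z i) P = gpMeasure γ) (N : ℕ) :
    P.map (fun ω (i : Fin N) => Z i ω) = gpPi γ N := by
  have h := hIndep.precomp (g := fun i : Fin N => (i : ℕ)) Fin.val_injective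
  have h2 := (iIndepFun_iff_map_fun_eq_pi_map (fun i => (hZmeas _).aemeasurable)).1 h
  have h3 : P.map (fun ω (i : Fin N) => Z i ω) = Measure.pi fun i : Fin N => P.map (Z i) := h2
  rw [h3]
  simp_rw [hDist]
  rfl

lemma law_Psi (γ : ℝ) (n : ℕ) :
    (Qm γ n).map (fun p => (Fin.append p.2.1 (Fin.cons p.1 p.2.2 : Fin (n+1) → ℝ) :
      Fin (n + (n+1)) → ℝ)) = gpPi γ (n + (n+1)) := by
  have hc : Measurable (fun p : ℝ × (Fin n → ℝ) => (Fin.cons p.1 p.2 : Fin (n+1) → ℝ)) := by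
    refine measurable_pi_lambda _ fun i => ?_
    refine Fin.cases ?_ (fun i => ?_) i
    · simp only [Fin.cons_zero]; fun_prop
    · simp only [Fin.cons_succ]; fun_prop
  have hcm : ((gpMeasure γ).prod (gpPi γ n)).map
      (fun p => (Fin.cons p.1 p.2 : Fin (n+1) → ℝ)) = gpPi γ (n+1) := cons_map (gpMeasure γ) n
  have ham : ((gpPi γ n).prod (gpPi γ (n+1))).map
      (fun p => (Fin.append p.1 p.2 : Fin (n + (n+1)) → ℝ)) = gpPi γ (n + (n+1)) :=
    append_map (gpMeasure γ) n (n+1)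
  have hre : (Qm γ n).map (fun p => (p.2.1, (p.1, p.2.2)))
      = (gpPi γ n).prod ((gpMeasure γ).prod (gpPi γ n)) := by
    symm
    refine Measure.ext_of_lintegral _ fun F hF => ?_
    rw [lintegral_map hF (by fun_prop), lintegral_prod _ hF.aemeasurable]
    unfold Qm
    rw [lintegral_prod _ (by fun_prop)]
    have h1 : ∀ x : Fin n → ℝ, ∫⁻ y, F (x, y) ∂((gpMeasure γ).prod (gpPi γ n))
        = ∫⁻ z, ∫⁻ x', F (x, (z, x')) ∂(gpPi γ n) ∂(gpMeasure γ) := fun x =>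
      lintegral_prod _ (by fun_prop)
    have h2 : ∀ z : ℝ, ∫⁻ y : (Fin n → ℝ) × (Fin n → ℝ), F (y.1, (z, y.2))
          ∂((gpPi γ n).prod (gpPi γ n))
        = ∫⁻ x, ∫⁻ x', F (x, (z, x')) ∂(gpPi γ n) ∂(gpPi γ n) := fun z =>
      lintegral_prod _ (by fun_prop)
    simp_rw [h1, h2]
    rw [lintegral_lintegral_swap]
    exact (Measurable.lintegral_prod_right' (f := fun q : ((Fin n → ℝ) × ℝ) × (Fin n → ℝ) =>
      F (q.1.1, (q.1.2, q.2))) (by fun_prop)).aemeasurable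
  rw [← ham, ← hcm]
  have hid : (gpPi γ n).prod (((gpMeasure γ).prod (gpPi γ n)).map
      (fun p => (Fin.cons p.1 p.2 : Fin (n+1) → ℝ)))
      = ((gpPi γ n).prod ((gpMeasure γ).prod (gpPi γ n))).map
        (Prod.map id (fun p => (Fin.cons p.1 p.2 : Fin (n+1) → ℝ))) := by
    rw [← Measure.map_prod_map _ _ measurable_id hc, Measure.map_id]
  rw [hid, ← hre,
    Measure.map_map (measurable_id.prodMap hc) (by fun_prop),
    Measure.map_map (measurable_append n (n+1)) ((measurable_id.prodMap hc).comp (by fun_prop))]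
  rfl

lemma zeta_bound_aux
    {Ω : Type*} [MeasurableSpace Ω] (P : Measure Ω) [IsProbabilityMeasure P]
    (γ : ℝ) (k : ℕ)
    (K : (Fin (k+1) → ℝ) → ℝ) (hK : Measurable K)
    (hLS : LocScaleInvariant K)
    (hMom : MomentCond γ K)
    (Z : ℕ → Ω → ℝ) (hZmeas : ∀ i, Measurable (Z i))
    (hIndep : iIndepFun Z P)
    (hDist : ∀ i, Measure.map (Z i) P = gpMeasure γ) (n : ℕ) (hn : k ≤ n) (a : ℝ) (ha : 2 < a) :
      zetaCov P K Z (n+1) 1 ≤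
        (2 * ((k+1 : ℕ) : ℝ)) ^ (1 - 2/a) * (normKa γ K a) ^ 2 * ((n+1 : ℕ) : ℝ) ^ (2/a - 1) := by
  refine le_trans (le_of_eq ?_) (core γ hn K hK hLS hMom a ha)
  set W : Ω → (Fin (n + (n+1)) → ℝ) := fun ω i => Z i ω with hW
  have hWm : Measurable W := measurable_pi_lambda _ fun i => hZmeas _
  set Psi : ℝ × ((Fin n → ℝ) × (Fin n → ℝ)) → (Fin (n + (n+1)) → ℝ) := fun p =>
    Fin.append p.2.1 (Fin.cons p.1 p.2.2 : Fin (n+1) → ℝ) with hPsi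
  have hPm : Measurable Psi := by
    have hc : Measurable (fun p : ℝ × (Fin n → ℝ) => (Fin.cons p.1 p.2 : Fin (n+1) → ℝ)) := by
      refine measurable_pi_lambda _ fun i => ?_
      refine Fin.cases ?_ (fun i => ?_) i
      · simp only [Fin.cons_zero]; fun_prop
      · simp only [Fin.cons_succ]; fun_prop
    exact (measurable_append n (n+1)).comp
      (measurable_snd.fst.prodMk (hc.comp (measurable_fst.prodMk measurable_snd.snd)))
  have tr : ∀ G : (Fin (n + (n+1)) → ℝ) → ℝ, Measurable G →
      ∫ ω, G (W ω) ∂P = ∫ p, G (Psi p) ∂(Qm γ n) := by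
    intro G hG
    rw [← integral_map hWm.aemeasurable hG.aestronglyMeasurable,
      ← integral_map hPm.aemeasurable hG.aestronglyMeasurable,
      law_joint P γ Z hZmeas hIndep hDist, law_Psi]
  set G1 : (Fin (n + (n+1)) → ℝ) → ℝ := fun w => Km K (n+1) (fun i => w ⟨i, by omega⟩) with hG1
  set G2 : (Fin (n + (n+1)) → ℝ) → ℝ := fun w => Km K (n+1) (fun i => w ⟨n + i, by omega⟩) with hG2
  have hG1m : Measurable G1 := (measurable_Km hK _).comp
    (measurable_pi_lambda _ fun i => measurable_pi_apply _)
  have hG2m : Measurable G2 := (measurable_Km hK _).comp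
    (measurable_pi_lambda _ fun i => measurable_pi_apply _)
  have e1 : ∀ p, G1 (Psi p) = Km K (n+1) (vL p) := by
    intro p
    simp only [hG1, vL]
    congr 1
    ext i
    refine Fin.lastCases ?_ (fun i => ?_) i
    · have : (⟨((Fin.last n : Fin (n+1)) : ℕ), by simp⟩ : Fin (n + (n+1))) = Fin.natAdd n 0 := by
        ext; simp
      rw [this]; simp [hPsi]
    · have : (⟨((Fin.castSucc i : Fin (n+1)) : ℕ), by simp; omega⟩ : Fin (n + (n+1)))
          = Fin.castAdd (n+1) i := by
        ext; simp
      rw [this]; simp [hPsi]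
  have e2 : ∀ p, G2 (Psi p) = Km K (n+1) (vR p) := by
    intro p
    simp only [hG2, vR, Km]
    congr 1
    ext j
    rw [← descStat_cons]
    congr 1
    ext i
    exact Fin.append_right _ _ i
  have t1 := tr G1 hG1m
  have t2 := tr G2 hG2m
  have t3 := tr (fun w => G1 w * G2 w) (hG1m.mul hG2m)
  simp_rw [e1] at t1
  simp_rw [e2] at t2
  simp_rw [e1, e2] at t3
  rw [← t1, ← t2, ← t3]
  rfl

/-- Lemma: bound on `ζ_{m,1}`.
For every `m ≥ q` and `a > 2`, `ζ_{m,1} ≤ (2q)^{1-2/a} ‖K‖_a² m^{2/a-1}`. -/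
theorem zeta_m_one_bound
    {Ω : Type*} [MeasurableSpace Ω] (P : Measure Ω) [IsProbabilityMeasure P]
    (γ : ℝ) (q : ℕ) (hq : 3 ≤ q)
    (K : (Fin q → ℝ) → ℝ) (hKmeas : Measurable K)
    (hLS : LocScaleInvariant K)
    (hNonconst : ∃ x y : Fin q → ℝ, K x ≠ K y)
    (hMom : MomentCond γ K)
    (Z : ℕ → Ω → ℝ) (hZmeas : ∀ i, Measurable (Z i))
    (hIndep : iIndepFun Z P)
    (hDist : ∀ i, Measure.map (Z i) P = gpMeasure γ) :
    ∀ m : ℕ, q ≤ m → ∀ a : ℝ, 2 < a →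
      zetaCov P K Z m 1 ≤
        (2 * (q : ℝ)) ^ (1 - 2/a) * (normKa γ K a) ^ 2 * (m : ℝ) ^ (2/a - 1) := by
  intro m hm a ha
  obtain ⟨k, rfl⟩ : ∃ k, q = k + 1 := ⟨q - 1, by omega⟩
  obtain ⟨n, rfl⟩ : ∃ n, m = n + 1 := ⟨m - 1, by omega⟩
  exact zeta_bound_aux P γ k K hKmeas hLS hMom Z hZmeas hIndep hDist n (by omega) a ha

end
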